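/- Let Ψ be a forest-algebra formula and let v be a node of Ψ such that the first 8 nodes on lp(v) each have absolute balance at least 2. Then there is a node u on lp(v) such that either a height reducing rotation is applicable at u, or a height reducing double rotation is applicable at u, or u is a ⊙-node with balance(u) ≤ −2 at which a height preserving rotation is applicable. -/

import Mathlib

/-! ### Forest-algebra formulas

A forest-algebra formula is a binary parse tree whose inner nodes are
labeled by one of the five forest-algebra operations and whose leaves are
labeled by a symbol `a` (a single-node forest, constructor `fa`) or `a_□`
(the context with a single `a`-labeled root whose only child is the hole,
constructor `ca`).  The two leaf-label types `α` and `β` are kept separate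
so that leaves may carry extra decorations. -/

/-- The five forest-algebra operations: `⊕_HH`, `⊕_HV`, `⊕_VH`, `⊙_VV`,
`⊙_VH`. -/
inductive FAOp : Type
  | hh | hv | vh | vv | vhd
deriving DecidableEq

inductive Formula (α β : Type) : Type
  | fa : α → Formula α β
  | ca : β → Formula α β
  | node : FAOp → Formula α β → Formula α β → Formula α β

namespace Formula

variable {α β : Type}

/-- The height of (the parse tree of) a formula. -/
def height : Formula α β → ℕ
  | fa _ => 1
  | ca _ => 1
  | node _ l r => 1 + max l.height r.height

/-- The number of leaves of a formula. -/
def numLeaves : Formula α β → ℕ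
  | fa _ => 1
  | ca _ => 1
  | node _ l r => l.numLeaves + r.numLeaves

/-- `balance(v)`: height of the right subformula minus height of the left
subformula (0 for leaves). -/
def bal : Formula α β → ℤ
  | node _ l r => (r.height : ℤ) - (l.height : ℤ)
  | _ => 0

/-- The absolute balance. -/
def abal (t : Formula α β) : ℤ := |t.bal|

/-- The sort of a (sub)formula: `true` if it denotes a forest,
`false` if it denotes a context. -/
def sort : Formula α β → Bool
  | fa _ => true
  | ca _ => false
  | node .hh _ _ => true
  | node .vhd _ _ => true
  | node _ _ _ => false

/-- Well-typedness of a formula: the operands of each operation have the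
required sorts. -/
def WT : Formula α β → Prop
  | fa _ => True
  | ca _ => True
  | node .hh l r => l.sort = true ∧ r.sort = true ∧ WT l ∧ WT r
  | node .hv l r => l.sort = true ∧ r.sort = false ∧ WT l ∧ WT r
  | node .vh l r => l.sort = false ∧ r.sort = true ∧ WT l ∧ WT r
  | node .vv l r => l.sort = false ∧ r.sort = false ∧ WT l ∧ WT r
  | node .vhd l r => l.sort = false ∧ r.sort = true ∧ WT l ∧ WT r

/-- `IsSubformula t s`: `t` is the subformula of `s` rooted at some node. -/
inductive IsSubformula : Formula α β → Formula α β → Prop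
  | refl (t : Formula α β) : IsSubformula t t
  | left {t l r} {op : FAOp} : IsSubformula t l → IsSubformula t (node op l r)
  | right {t l r} {op : FAOp} : IsSubformula t r → IsSubformula t (node op l r)

/-- The long path `lp(v)` of (the subformula rooted at) `v`, as the list of
subformulas rooted at its nodes: it stops at the first node of balance 0 and
otherwise continues into the strictly deeper subformula. -/
def lpList : Formula α β → List (Formula α β)
  | node op l r =>
    if l.height = r.height then [node op l r]
    else if l.height < r.height then node op l r :: lpList r
    else node op l r :: lpList l
  | t => [t]

end Formula

namespace Formula

variable {α β : Type}

/-- The eight rotation equations of associativity shape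
`(x1 ∘_a x2) ∘_b x3 = x1 ∘_c (x2 ∘_d x3)` of Table 2, given by the tuples
`(a, b, c, d)` of operation labels. -/
def assocCombos : List (FAOp × FAOp × FAOp × FAOp) :=
  [(.hh, .hh, .hh, .hh),
   (.vh, .vh, .vh, .hh),
   (.hv, .vh, .hv, .vh),
   (.hh, .hv, .hv, .hv),
   (.vv, .vv, .vv, .vv),
   (.vv, .vhd, .vhd, .vhd),
   (.hv, .vhd, .hh, .vhd),
   (.hv, .vv, .hv, .vv)]

/-- The two rotation equations of swap shape
`(x1 ∘_a x2) ∘_b x3 = (x1 ∘_c x3) ∘_d x2` of Table 2 (rotations 3a/3b). -/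
def swapCombos : List (FAOp × FAOp × FAOp × FAOp) :=
  [(.vh, .vhd, .vhd, .hh),
   (.vh, .vv, .vv, .vh)]

/-- A height reducing rotation is applicable at (the subformula) `t`: the
labels of `t` and its deeper child match one of the ten rotation equations
and the subformula `Ψ_↑` that moves up is strictly deeper than the other two
(`height(Ψ_↑) > max(height(Ψ_↓), height(Ψ_→))`). -/
def HRApplicable (t : Formula α β) : Prop :=
  -- a-direction of an associativity rotation: up = x1, down = x3, stay = x2
  (∃ a b c d x1 x2 x3, (a, b, c, d) ∈ assocCombos ∧
    t = node b (node a x1 x2) x3 ∧ x1.height > max x3.height x2.height) ∨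
  -- b-direction of an associativity rotation: up = x3, down = x1, stay = x2
  (∃ a b c d x1 x2 x3, (a, b, c, d) ∈ assocCombos ∧
    t = node c x1 (node d x2 x3) ∧ x3.height > max x1.height x2.height) ∨
  -- rotation 3a: up = x2, down = x3, stay = x1
  (∃ a b c d x1 x2 x3, (a, b, c, d) ∈ swapCombos ∧
    t = node b (node a x1 x2) x3 ∧ x2.height > max x3.height x1.height) ∨
  -- rotation 3b: up = x3, down = x2, stay = x1
  (∃ a b c d x1 x2 x3, (a, b, c, d) ∈ swapCombos ∧
    t = node d (node c x1 x3) x2 ∧ x3.height > max x2.height x1.height)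

/-- A height preserving rotation is applicable at `t`: the labels match one
of the ten rotation equations and the subformula `Ψ_→` that stays at the same
level is strictly deeper than the other two
(`height(Ψ_→) > max(height(Ψ_↑), height(Ψ_↓))`). -/
def HPApplicable (t : Formula α β) : Prop :=
  (∃ a b c d x1 x2 x3, (a, b, c, d) ∈ assocCombos ∧
    t = node b (node a x1 x2) x3 ∧ x2.height > max x1.height x3.height) ∨
  (∃ a b c d x1 x2 x3, (a, b, c, d) ∈ assocCombos ∧
    t = node c x1 (node d x2 x3) ∧ x2.height > max x1.height x3.height) ∨
  (∃ a b c d x1 x2 x3, (a, b, c, d) ∈ swapCombos ∧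
    t = node b (node a x1 x2) x3 ∧ x1.height > max x2.height x3.height) ∨
  (∃ a b c d x1 x2 x3, (a, b, c, d) ∈ swapCombos ∧
    t = node d (node c x1 x3) x2 ∧ x1.height > max x2.height x3.height)

/-- A concatenation label. -/
def _root_.FAOp.isOplus : FAOp → Prop
  | .hh => True
  | .hv => True
  | .vh => True
  | _ => False

/-- A height reducing double rotation (rotation 4a or 4b) is applicable at
`t`: `t` and the next two nodes on its long path are ⊕-nodes with alternating
balance directions, a height preserving single rotation is applicable at the
middle node and, after it, a height reducing single rotation at `t`. -/
def HRDoubleApplicable (t : Formula α β) : Prop :=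
  -- rotation 4a
  (∃ (b1 b2 b3 : FAOp) (x1 x2 x3 x4 : Formula α β),
    b1.isOplus ∧ b2.isOplus ∧ b3.isOplus ∧
    t = node b1 (node b2 x1 (node b3 x2 x3)) x4 ∧
    x2.height > max x1.height x3.height ∧
    1 + max x1.height x2.height > max x4.height x3.height) ∨
  -- rotation 4b
  (∃ (b1 b2 b3 : FAOp) (x1 x2 x3 x4 : Formula α β),
    b1.isOplus ∧ b2.isOplus ∧ b3.isOplus ∧
    t = node b1 x1 (node b2 (node b3 x2 x3) x4) ∧
    x3.height > max x2.height x4.height ∧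
    1 + max x3.height x4.height > max x1.height x2.height)

/-- `t` is a ⊙-node (context application node). -/
def isConApp : Formula α β → Prop
  | node .vv _ _ => True
  | node .vhd _ _ => True
  | _ => False

end Formula

namespace Formula

variable {α β : Type}

/-- The conclusion of the theorem at a node. -/
def Good (u : Formula α β) : Prop :=
  HRApplicable u ∨ HRDoubleApplicable u ∨ (isConApp u ∧ u.bal ≤ -2 ∧ HPApplicable u)

/-- `Trace p t`: the long path of `t` starts with nodes whose labels and directions
(`true` = right child deeper) are given by `p`, each with absolute balance at least 2
and none of them good. -/
def Trace : List (FAOp × Bool) → Formula α β → Prop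
  | [], t => t.WT
  | (op, d) :: p, t => ∃ l r, t = node op l r ∧ t.WT ∧ ¬ Good t ∧
      ((d = true ∧ l.height + 2 ≤ r.height ∧ Trace p r) ∨
       (d = false ∧ r.height + 2 ≤ l.height ∧ Trace p l))

theorem WT.children {op : FAOp} {l r : Formula α β} (h : (node op l r).WT) :
    l.WT ∧ r.WT := by
  cases op <;> simp only [WT] at h <;> tauto

theorem WT.sub {t s : Formula α β} (h : IsSubformula t s) : s.WT → t.WT := by
  induction h with
  | refl => exact id
  | left _ ih => exact fun h => ih h.children.1
  | right _ ih => exact fun h => ih h.children.2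

theorem exists_trace (n : ℕ) : ∀ t : Formula α β, t.WT → n ≤ t.lpList.length →
    (∀ u ∈ t.lpList.take n, 2 ≤ u.abal) → (∀ u ∈ t.lpList, ¬ Good u) →
    ∃ p : List (FAOp × Bool), p.length = n ∧ Trace p t := by
  induction n with
  | zero => exact fun t h _ _ _ => ⟨[], rfl, h⟩
  | succ n ih =>
    intro t hw hl hb hg
    match t with
    | fa x => simp [lpList, abal, bal] at hb
    | ca x => simp [lpList, abal, bal] at hb
    | node op l r =>
      have hb0 : 2 ≤ (node op l r).abal := by
        apply hb
        rw [lpList]; split_ifs <;> simp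
      have hg0 : ¬ Good (node op l r) := by
        apply hg
        rw [lpList]; split_ifs <;> simp
      simp only [abal, bal] at hb0
      rw [lpList] at hl hb hg
      rcases le_abs.1 hb0 with h | h
      · rw [if_neg (by omega), if_pos (by omega)] at hl hb hg
        simp only [List.take_succ_cons, List.mem_cons, List.length_cons] at hl hb hg
        obtain ⟨p, hp, ht⟩ := ih r hw.children.2 (by omega) (fun u hu => hb u (Or.inr hu))
          (fun u hu => hg u (Or.inr hu))
        exact ⟨(op, true) :: p, by simp [hp],
          l, r, rfl, hw, hg0, Or.inl ⟨rfl, by omega, ht⟩⟩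
      · rw [if_neg (by omega), if_neg (by omega)] at hl hb hg
        simp only [List.take_succ_cons, List.mem_cons, List.length_cons] at hl hb hg
        obtain ⟨p, hp, ht⟩ := ih l hw.children.1 (by omega) (fun u hu => hb u (Or.inr hu))
          (fun u hu => hg u (Or.inr hu))
        exact ⟨(op, false) :: p, by simp [hp],
          l, r, rfl, hw, hg0, Or.inr ⟨rfl, by omega, ht⟩⟩

/-- The transitions between consecutive path nodes that admit no single rotation. -/
def allowed : FAOp × Bool → FAOp × Bool → Bool
  | (.hh, true), (.hh, false) => true
  | (.hh, false), (.hh, true) => true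
  | (.hh, _), (.vhd, false) => true
  | (.hv, false), (.hh, true) => true
  | (.hv, false), (.vhd, _) => true
  | (.hv, true), (.hv, false) => true
  | (.hv, true), (.vh, false) => true
  | (.hv, true), (.vv, false) => true
  | (.vh, false), (.hv, true) => true
  | (.vh, false), (.vh, true) => true
  | (.vh, false), (.vv, false) => true
  | (.vh, true), (.hh, false) => true
  | (.vh, true), (.vhd, _) => true
  | (.vv, true), (.hv, _) => true
  | (.vv, true), (.vh, _) => true
  | (.vv, true), (.vv, false) => true
  | (.vhd, true), (.hh, _) => true
  | (.vhd, true), (.vhd, false) => true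
  | _, _ => false

theorem no_LL {a b : FAOp} {x y z : Formula α β} (hg : ¬ Good (node b (node a x y) z))
    (h1 : y.height + 2 ≤ x.height) (h2 : z.height + 2 ≤ (node a x y).height) :
    (∀ c d, (a, b, c, d) ∉ assocCombos) ∧
    (isConApp (node b (node a x y) z) → ∀ c d, (a, b, c, d) ∉ swapCombos) := by
  have h2' := h2
  simp only [height] at h2'
  refine ⟨fun c d hm => hg (Or.inl (Or.inl ⟨a, b, c, d, x, y, z, hm, rfl, by omega⟩)),
    fun hc c d hm => hg (Or.inr (Or.inr ⟨hc, by simp only [bal]; omega,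
      Or.inr (Or.inr (Or.inl ⟨a, b, c, d, x, y, z, hm, rfl, by omega⟩))⟩))⟩

theorem no_LR {a b : FAOp} {x y z : Formula α β} (hg : ¬ Good (node b (node a x y) z))
    (h1 : x.height + 2 ≤ y.height) (h2 : z.height + 2 ≤ (node a x y).height) :
    (∀ c d, (a, b, c, d) ∉ swapCombos) ∧ (∀ c d, (c, d, a, b) ∉ swapCombos) ∧
    (isConApp (node b (node a x y) z) → ∀ c d, (a, b, c, d) ∉ assocCombos) := by
  have h2' := h2
  simp only [height] at h2'
  refine ⟨fun c d hm => hg (Or.inl (Or.inr (Or.inr (Or.inl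
      ⟨a, b, c, d, x, y, z, hm, rfl, by omega⟩)))),
    fun c d hm => hg (Or.inl (Or.inr (Or.inr (Or.inr
      ⟨c, d, a, b, x, z, y, hm, rfl, by omega⟩)))),
    fun hc c d hm => hg (Or.inr (Or.inr ⟨hc, by simp only [bal]; omega,
      Or.inl ⟨a, b, c, d, x, y, z, hm, rfl, by omega⟩⟩))⟩

theorem no_RR {a b : FAOp} {x y z : Formula α β} (hg : ¬ Good (node b z (node a x y)))
    (h1 : x.height + 2 ≤ y.height) (h2 : z.height + 2 ≤ (node a x y).height) :
    ∀ c d, (c, d, b, a) ∉ assocCombos := by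
  simp only [height] at h2
  exact fun c d hm => hg (Or.inl (Or.inr (Or.inl ⟨c, d, b, a, z, x, y, hm, rfl, by omega⟩)))

theorem Trace.tail {s : FAOp × Bool} {p : List (FAOp × Bool)} {t : Formula α β}
    (h : Trace (s :: p) t) : ∃ t' : Formula α β, Trace p t' := by
  obtain ⟨l, r, -, -, -, h | h⟩ := h
  exacts [⟨_, h.2.2⟩, ⟨_, h.2.2⟩]

theorem Trace.pair {s s' : FAOp × Bool} {p : List (FAOp × Bool)} {t : Formula α β}
    (h : Trace (s :: s' :: p) t) : allowed s s' = true := by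
  obtain ⟨b, d⟩ := s
  obtain ⟨a, e⟩ := s'
  obtain ⟨l, r, rfl, hw, hg, ⟨rfl, hh, x, y, rfl, -, -, h⟩ | ⟨rfl, hh, x, y, rfl, -, -, h⟩⟩ := h <;>
  obtain ⟨rfl, h, -⟩ | ⟨rfl, h, -⟩ := h
  · have := no_RR hg h hh
    cases b <;> cases a <;> simp_all [allowed, assocCombos, WT, sort]
  · cases b <;> cases a <;> simp_all [allowed, WT, sort]
  · have := no_LR hg h hh
    cases b <;> cases a <;> simp_all [allowed, assocCombos, swapCombos, WT, sort, isConApp]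
  · have := no_LL hg h hh
    cases b <;> cases a <;> simp_all [allowed, assocCombos, swapCombos, WT, sort, isConApp]

theorem Trace.triple {a b c : FAOp} {d : Bool} {p : List (FAOp × Bool)} {t : Formula α β}
    (h : Trace ((a, d) :: (b, !d) :: (c, d) :: p) t) :
    ¬ (a.isOplus ∧ b.isOplus ∧ c.isOplus) := by
  rintro ⟨ha, hb, hc⟩
  cases d
  · obtain ⟨l, r, rfl, -, hg, h | ⟨-, h1, x, y, rfl, -, -, ⟨-, h2, u, v, rfl, -, -, h | ⟨-, h3, -⟩⟩ | h⟩⟩ := h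
    · simp at h
    · simp at h
    · simp only [height] at h1 h2
      exact hg (Or.inr (Or.inl (Or.inl ⟨a, b, c, x, u, v, r, ha, hb, hc, rfl, by omega, by omega⟩)))
    · simp at h
  · obtain ⟨l, r, rfl, -, hg, ⟨-, h1, x, y, rfl, -, -, h | ⟨-, h2, u, v, rfl, -, -, ⟨-, h3, -⟩ | h⟩⟩ | h⟩ := h
    · simp at h
    · simp only [height] at h1 h2
      exact hg (Or.inr (Or.inl (Or.inr ⟨a, b, c, l, u, v, y, ha, hb, hc, rfl, by omega, by omega⟩)))
    · simp at h
    · simp at h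

/-- Boolean version of the constraint excluding double rotations. -/
def noDouble : FAOp × Bool → FAOp × Bool → FAOp × Bool → Bool
  | (a, d), (b, e), (c, f) =>
    !(d != e && d == f && (a != .vv && a != .vhd) && (b != .vv && b != .vhd)
      && (c != .vv && c != .vhd))

theorem Trace.noDouble {s s' s'' : FAOp × Bool} {p : List (FAOp × Bool)} {t : Formula α β}
    (h : Trace (s :: s' :: s'' :: p) t) : noDouble s s' s'' = true := by
  obtain ⟨a, d⟩ := s
  obtain ⟨b, e⟩ := s'
  obtain ⟨c, f⟩ := s''
  by_contra hn
  simp only [Formula.noDouble] at hn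
  have : d ≠ e ∧ d = f := by
    revert hn; cases d <;> cases e <;> cases f <;> simp
  obtain ⟨h1, rfl⟩ := this
  obtain rfl : e = !d := by revert h1; cases d <;> cases e <;> simp
  apply h.triple
  cases a <;> cases b <;> cases c <;> simp_all [FAOp.isOplus]

/-- Can the last two states be extended by `n` further states? -/
def extendable : ℕ → FAOp × Bool → FAOp × Bool → Bool
  | 0, _, _ => true
  | n + 1, s, s' =>
    ([FAOp.hh, .hv, .vh, .vv, .vhd].flatMap fun a => [(a, true), (a, false)]).any fun s'' =>
      allowed s' s'' && Formula.noDouble s s' s'' && extendable n s' s''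

theorem Trace.extendable {s s' : FAOp × Bool} {p : List (FAOp × Bool)} :
    ∀ {t : Formula α β}, Trace (s :: s' :: p) t → extendable p.length s s' = true := by
  induction p generalizing s s' with
  | nil => intros; rfl
  | cons s'' p ih =>
    intro t h
    obtain ⟨t', h'⟩ := h.tail
    simp only [List.length_cons, Formula.extendable, List.any_eq_true]
    refine ⟨s'', ?_, by simp [h.noDouble, h'.pair, ih h']⟩
    obtain ⟨a, d⟩ := s''
    cases a <;> cases d <;> simp

theorem not_extendable (s s' : FAOp × Bool) :
    (allowed s s' && Formula.extendable 6 s s') = false := by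
  obtain ⟨a, d⟩ := s
  obtain ⟨b, e⟩ := s'
  cases a <;> cases d <;> cases b <;> cases e <;> rfl

end Formula

/-- Let `Ψ` be a (well-typed) forest-algebra formula and `v`
a node of `Ψ` (with subformula `t`) such that the first 8 nodes on `lp(v)`
each have absolute balance at least 2.  Then there is a node `u` on `lp(v)`
such that either a height reducing rotation is applicable at `u`, or a height
reducing double rotation is applicable at `u`, or `u` is a ⊙-node with
`balance(u) ≤ −2` at which a height preserving rotation is applicable. -/
theorem imbalanced_long_path_rotation_possible {σ : Type}
    (Ψ t : Formula σ σ)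
    (hWT : Ψ.WT)
    (hsub : Formula.IsSubformula t Ψ)
    (hlen : 8 ≤ t.lpList.length)
    (hbal : ∀ u ∈ t.lpList.take 8, 2 ≤ u.abal) :
    ∃ u ∈ t.lpList,
      Formula.HRApplicable u ∨
      Formula.HRDoubleApplicable u ∨
      (Formula.isConApp u ∧ u.bal ≤ -2 ∧ Formula.HPApplicable u) := by
  by_contra hcon
  push Not at hcon
  obtain ⟨p, hp, ht⟩ := Formula.exists_trace 8 t (Formula.WT.sub hsub hWT) hlen hbal
    (fun u hu h => by
      have := hcon u hu
      rcases h with h | h | h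
      · exact this.1 h
      · exact this.2.1 h
      · exact this.2.2 h.1 h.2.1 h.2.2)
  match p, hp, ht with
  | s :: s' :: p, hp, ht =>
    have h1 := Formula.not_extendable s s'
    have h2 := ht.extendable
    have h3 : p.length = 6 := by simpa using hp
    rw [h3] at h2
    simp [h2, ht.pair] at h1
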